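/- Let S' = K[x_1,…,x_{n-1}], S = S'[x_n], and let V ⊆ U be square-free monomial ideals of S' with U ≠ V; set W = (V + x_n U)S and suppose d := depth_{S'} (S'/U) = depth_{S'} (S'/V). Then d = depth_{S'} (U/V) if and only if d = depth_S (S/W). -/

import Mathlib

open MvPolynomial

/-- The square-free monomial `∏ i ∈ T, X i` associated to a set `T` of variables. -/
noncomputable def sqMon (K : Type) [Field K] {n : ℕ} (T : Finset (Fin n)) :
    MvPolynomial (Fin n) K :=
  ∏ i ∈ T, X i

/-- `GenBySqMonOfDeg K P I` means: `I` is generated by square-free monomials whose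
degrees satisfy the predicate `P`. -/
def GenBySqMonOfDeg (K : Type) [Field K] {n : ℕ} (P : ℕ → Prop)
    (I : Ideal (MvPolynomial (Fin n) K)) : Prop :=
  ∃ G : Set (Finset (Fin n)), (∀ T ∈ G, P T.card) ∧ I = Ideal.span (sqMon K '' G)

/-- `rho K d I` : the number of square-free monomials of degree `d` belonging to `I`. -/
noncomputable def rho (K : Type) [Field K] {n : ℕ} (d : ℕ)
    (I : Ideal (MvPolynomial (Fin n) K)) : ℕ :=
  Set.ncard {T : Finset (Fin n) | T.card = d ∧ sqMon K T ∈ I}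

/-- The maximal graded ideal `(x_1, …, x_n)` of `K[x_1, …, x_n]`. -/
noncomputable def maxGraded (K : Type) [Field K] (n : ℕ) :
    Ideal (MvPolynomial (Fin n) K) :=
  Ideal.span (Set.range (X : Fin n → MvPolynomial (Fin n) K))

/-- The depth of the module `M` with respect to the ideal `I` : the supremum of the
lengths of `M`-regular sequences consisting of elements of `I`. -/
noncomputable def moduleDepth {R : Type} [CommRing R] (I : Ideal R)
    (M : Type) [AddCommGroup M] [Module R M] : ℕ∞ :=
  sSup {k : ℕ∞ | ∃ rs : List R, k = (rs.length : ℕ∞) ∧ (∀ r ∈ rs, r ∈ I) ∧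
    RingTheory.Sequence.IsRegular M rs}

/-- The `R`-module `I/J` (more precisely `I/(I ∩ J)`, which is `I/J` when `J ≤ I`). -/
noncomputable abbrev idealQuot {R : Type} [CommRing R] (I J : Ideal R) : Type :=
  ↥I ⧸ (Submodule.comap I.subtype (J : Submodule R R))

open RingTheory.Sequence CategoryTheory Abelian

def HasReg {R : Type} [CommRing R] (I : Ideal R) (M : Type) [AddCommGroup M] [Module R M]
    (k : ℕ) : Prop :=
  ∃ rs : List R, rs.length = k ∧ (∀ r ∈ rs, r ∈ I) ∧ IsRegular M rs

lemma HasReg.mono {R : Type} [CommRing R] {I : Ideal R} {M : Type} [AddCommGroup M] [Module R M]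
    {k l : ℕ} (h : HasReg I M k) (hl : l ≤ k) : HasReg I M l := by
  obtain ⟨rs, hk, hm, hr⟩ := h
  refine ⟨rs.take l, by simp [hk, hl], fun r h => hm r (List.mem_of_mem_take h), ?_, ?_⟩
  · have := hr.toIsWeaklyRegular
    rw [← List.take_append_drop l rs, isWeaklyRegular_append_iff] at this
    exact this.1
  · intro h
    apply hr.top_ne_smul
    refine le_antisymm ?_ le_top
    conv_lhs => rw [h]
    refine Submodule.smul_mono_left ?_
    conv_rhs => rw [← List.take_append_drop l rs, Ideal.ofList_append]
    exact le_sup_left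

lemma hasReg_iff {R : Type} [CommRing R] {I : Ideal R} {M : Type} [AddCommGroup M] [Module R M]
    (h0 : HasReg I M 0) (k : ℕ) : HasReg I M k ↔ (k : ℕ∞) ≤ moduleDepth I M := by
  constructor
  · rintro ⟨rs, rfl, hm, hr⟩
    exact le_sSup ⟨rs, rfl, hm, hr⟩
  · intro h
    rcases k with _ | k
    · exact h0
    · have : (k : ℕ∞) < moduleDepth I M :=
        lt_of_lt_of_le (by exact_mod_cast Nat.lt_succ_self k) h
      obtain ⟨_, ⟨rs, rfl, hm, hr⟩, hlt⟩ := lt_sSup_iff.1 this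
      have hlt : k < rs.length := by exact_mod_cast hlt
      exact HasReg.mono ⟨rs, rfl, hm, hr⟩ hlt

lemma enat_aux {a b d : ℕ∞} (h : ∀ k : ℕ, (k : ℕ∞) ≤ d + 1 → ((k : ℕ∞) ≤ a ↔ (k : ℕ∞) ≤ b))
    (ha : a = d) : b = d := by
  subst ha
  refine ENat.eq_of_forall_natCast_le_iff fun k => ⟨fun hk => ?_, fun hk => ?_⟩
  · by_contra hlt
    push Not at hlt
    lift a to ℕ using ne_top_of_lt hlt
    have h1 : a < k := by exact_mod_cast hlt
    have h2 := (h (a + 1) (by simp)).2 (le_trans (by exact_mod_cast h1) hk)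
    have : a + 1 ≤ a := by exact_mod_cast h2
    omega
  · exact (h k (hk.trans le_self_add)).1 hk

lemma hasReg_ses {R : Type} [CommRing R] [IsNoetherianRing R] (I : Ideal R) (A B C : Type)
    [AddCommGroup A] [Module R A] [AddCommGroup B] [Module R B] [AddCommGroup C] [Module R C]
    [Module.Finite R A] [Module.Finite R B] [Module.Finite R C]
    (f : A →ₗ[R] B) (g : B →ₗ[R] C) (hf : Function.Injective f) (hg : Function.Surjective g)
    (hfg : Function.Exact f g)
    (hA : I • (⊤ : Submodule R A) < ⊤) (hB : I • (⊤ : Submodule R B) < ⊤)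
    (hC : I • (⊤ : Submodule R C) < ⊤) (m : ℕ) (hm : HasReg I C m) (k : ℕ) (hk : k ≤ m) :
    HasReg I A k ↔ HasReg I B k := by
  let S : ShortComplex (ModuleCat.{0} R) := ShortComplex.mk (ModuleCat.ofHom f) (ModuleCat.ofHom g)
    (by ext x; exact hfg.apply_apply_eq_zero x)
  have hS : S.ShortExact := by
    have : Mono S.f := (ModuleCat.mono_iff_injective _).2 hf
    have : Epi S.g := (ModuleCat.epi_iff_surjective _).2 hg
    refine ShortComplex.ShortExact.mk ?_
    rw [ShortComplex.ShortExact.moduleCat_exact_iff_function_exact]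
    exact hfg
  have key : ∀ (M : Type) [AddCommGroup M] [Module R M] [Module.Finite R M]
      (_ : I • (⊤ : Submodule R M) < ⊤) (n : ℕ), HasReg I M n ↔ 
      ∀ i < n, Subsingleton (Ext (ModuleCat.of R (Shrink.{0} (R ⧸ I))) (ModuleCat.of R M) i) := by
    intro M _ _ _ h n
    exact (ModuleCat.exists_isRegular_tfae I n (ModuleCat.of R M) h).out 3 1
  rw [key A hA, key B hB]
  rw [key C hC] at hm
  set N := ModuleCat.of R (Shrink.{0} (R ⧸ I))
  constructor
  · intro h i hi
    have h1 := h i hi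
    have h3 := hm i (by omega)
    refine subsingleton_of_forall_eq 0 fun x => ?_
    obtain ⟨y, hy⟩ := Ext.covariant_sequence_exact₂ N hS x (h3.elim _ _)
    rw [← hy, h1.elim y 0]
    simp
  · intro h i hi
    have h1 := h i hi
    refine subsingleton_of_forall_eq 0 fun x => ?_
    rcases i with _ | i
    · have : Mono S.f := hS.mono_f
      exact Ext.postcomp_mk₀_injective_of_mono N S.f (h1.elim _ _)
    · have h3 := hm i (by omega)
      obtain ⟨y, hy⟩ := Ext.covariant_sequence_exact₁ N hS x (h1.elim _ _) rfl
      rw [← hy, h3.elim y 0]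
      simp

lemma hasReg_transfer {R R' : Type} [CommRing R] [CommRing R'] (I : Ideal R) (I' : Ideal R')
    (p : R →+* R') (q : R' →+* R) (hpq : ∀ x, p (q x) = x) (hp : ∀ x ∈ I, p x ∈ I')
    (hq : ∀ x ∈ I', q x ∈ I) (M N : Type) [AddCommGroup M] [AddCommGroup N] [Module R' M]
    [Module R N] (e : M ≃+ N) (he : ∀ r x, e (p r • x) = r • e x) (k : ℕ) :
    HasReg I' M k ↔ HasReg I N k := by
  constructor
  · rintro ⟨rs, hk, hm, hr⟩
    refine ⟨rs.map q, by simp [hk], ?_, (AddEquiv.isRegular_congr (e := e) ?_).1 hr⟩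
    · simpa using fun x hx => hq x (hm x hx)
    · rw [List.forall₂_map_right_iff, List.forall₂_same]
      intro r _ x
      rw [← he, hpq]
  · rintro ⟨rs, hk, hm, hr⟩
    refine ⟨rs.map p, by simp [hk], ?_, (AddEquiv.isRegular_congr (e := e) ?_).2 hr⟩
    · simpa using fun x hx => hp x (hm x hx)
    · rw [List.forall₂_map_left_iff, List.forall₂_same]
      intro r _ x
      rw [← he]

lemma moduleDepth_congr {R R' : Type} [CommRing R] [CommRing R'] (I : Ideal R) (I' : Ideal R')
    (M N : Type) [AddCommGroup M] [AddCommGroup N] [Module R' M]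
    [Module R N] (h : ∀ k, HasReg I' M k ↔ HasReg I N k) :
    moduleDepth I' M = moduleDepth I N := by
  have : ∀ {R : Type} [CommRing R] (I : Ideal R) (M : Type) [AddCommGroup M] [Module R M],
      moduleDepth I M = sSup {x : ℕ∞ | ∃ k : ℕ, x = k ∧ HasReg I M k} := by
    intro R _ I M _ _
    unfold moduleDepth HasReg
    congr 1
    ext x
    constructor
    · rintro ⟨rs, rfl, h⟩; exact ⟨_, rfl, rs, rfl, h⟩
    · rintro ⟨_, rfl, rs, rfl, h⟩; exact ⟨rs, rfl, h⟩
  rw [this, this]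
  simp only [h]

lemma smul_top_lt_quot {R : Type} [CommRing R] (I J : Ideal R) (h : J ≤ I) (hI : I ≠ ⊤) :
    I • (⊤ : Submodule R (R ⧸ J)) < ⊤ := by
  rw [lt_top_iff_ne_top]
  intro ht
  obtain ⟨r, hr, h1⟩ := Submodule.exists_sub_one_mem_and_smul_eq_zero_of_fg_of_le_smul I
    (⊤ : Submodule R (R ⧸ J)) Module.Finite.fg_top ht.ge
  have := h1 (Submodule.Quotient.mk 1) trivial
  rw [← Submodule.Quotient.mk_smul, Submodule.Quotient.mk_eq_zero] at this
  apply hI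
  rw [Ideal.eq_top_iff_one]
  have h2 := I.sub_mem (h this) hr
  simpa using h2

lemma zero_hasReg {R : Type} [CommRing R] (I : Ideal R) (M : Type) [AddCommGroup M] [Module R M]
    (h : I • (⊤ : Submodule R M) < ⊤) : HasReg I M 0 := by
  have : Nontrivial M := (Submodule.nontrivial_iff R).mp (nontrivial_of_lt _ _ h)
  exact ⟨[], rfl, by simp, IsRegular.nil R M⟩

noncomputable def expo {n : ℕ} (T : Finset (Fin n)) : Fin n →₀ ℕ := ∑ i ∈ T, Finsupp.single i 1

lemma sqMon_eq (K : Type) [Field K] {n : ℕ} (T : Finset (Fin n)) :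
    sqMon K T = monomial (expo T) 1 := by
  rw [sqMon, expo, monomial_sum_one]
  rfl

lemma mem_span_sqMon (K : Type) [Field K] {n : ℕ} (G : Set (Finset (Fin n)))
    (f : MvPolynomial (Fin n) K) :
    f ∈ Ideal.span (sqMon K '' G) ↔ ∀ m ∈ f.support, ∃ T ∈ G, expo T ≤ m := by
  have : sqMon K '' G = (fun s => monomial s (1 : K)) '' (expo '' G) := by
    rw [Set.image_image]
    exact Set.image_congr fun T _ => sqMon_eq K T
  rw [this, mem_ideal_span_monomial_image]
  simp

lemma expo_map_last {n : ℕ} (T : Finset (Fin n)) :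
    expo (T.map Fin.castSuccEmb) (Fin.last n) = 0 := by
  simp [expo, Finsupp.finsetSum_apply]

lemma rename_sqMon (K : Type) [Field K] {n : ℕ} (T : Finset (Fin n)) :
    rename Fin.castSucc (sqMon K T) = sqMon K (T.map Fin.castSuccEmb) := by
  simp [sqMon, map_prod]

lemma map_span_sqMon (K : Type) [Field K] {n : ℕ} (G : Set (Finset (Fin n))) :
    Ideal.map (rename Fin.castSucc) (Ideal.span (sqMon K '' G)) =
      Ideal.span (sqMon K '' ((fun T => T.map Fin.castSuccEmb) '' G)) := by
  rw [Ideal.map_span, Set.image_image, Set.image_image]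
  congr 1
  exact Set.image_congr fun T _ => rename_sqMon K T

lemma last_mul_mem (K : Type) [Field K] {n : ℕ} (U : Ideal (MvPolynomial (Fin n) K))
    (hU : GenBySqMonOfDeg K (fun _ => True) U) (f : MvPolynomial (Fin (n + 1)) K)
    (h : X (Fin.last n) * f ∈ Ideal.map (rename Fin.castSucc) U) :
    f ∈ Ideal.map (rename Fin.castSucc) U := by
  obtain ⟨G, -, rfl⟩ := hU
  rw [map_span_sqMon, mem_span_sqMon] at h ⊢
  intro m hm
  obtain ⟨T, hT, hle⟩ := h (Finsupp.single (Fin.last n) 1 + m) (by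
    rw [mem_support_iff, coeff_X_mul]
    exact mem_support_iff.1 hm)
  refine ⟨T, hT, fun i => ?_⟩
  obtain ⟨T, -, rfl⟩ := hT
  by_cases hi : i = Fin.last n
  · subst hi
    simp [expo_map_last]
  · have := hle i
    simpa [Finsupp.single_apply, Ne.symm hi] using this

lemma X_mem_max (K : Type) [Field K] {n : ℕ} (i : Fin n) :
    (X i : MvPolynomial (Fin n) K) ∈ maxGraded K n := Ideal.subset_span ⟨i, rfl⟩

lemma constantCoeff_of_mem (K : Type) [Field K] {n : ℕ} (f : MvPolynomial (Fin n) K)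
    (h : f ∈ maxGraded K n) : constantCoeff f = 0 := by
  have : maxGraded K n ≤ RingHom.ker (constantCoeff : MvPolynomial (Fin n) K →+* K) := by
    rw [maxGraded, Ideal.span_le]
    rintro _ ⟨i, rfl⟩
    simp
  exact this h

lemma maxGraded_ne_top (K : Type) [Field K] (n : ℕ) : maxGraded K n ≠ ⊤ := by
  rw [Ne, Ideal.eq_top_iff_one]
  intro h
  simpa using constantCoeff_of_mem K _ h

lemma le_maxGraded (K : Type) [Field K] {n : ℕ} (U : Ideal (MvPolynomial (Fin n) K))
    (hU : GenBySqMonOfDeg K (fun _ => True) U) (h : U ≠ ⊤) : U ≤ maxGraded K n := by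
  obtain ⟨G, -, rfl⟩ := hU
  rw [Ideal.span_le]
  rintro _ ⟨T, hT, rfl⟩
  obtain rfl | ⟨i, hi⟩ := T.eq_empty_or_nonempty
  · exfalso
    apply h
    rw [Ideal.eq_top_iff_one]
    exact Ideal.subset_span ⟨∅, hT, by simp [sqMon]⟩
  · exact Ideal.mem_of_dvd _ (Finset.dvd_prod_of_mem _ hi) (X_mem_max K i)

/-- Cancelling a factor with constant term one modulo a monomial ideal. -/
lemma nak_aux (K : Type) [Field K] {n : ℕ} (U V : Ideal (MvPolynomial (Fin n) K))
    (hU : GenBySqMonOfDeg K (fun _ => True) U)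
    (hV : GenBySqMonOfDeg K (fun _ => True) V)
    (r : MvPolynomial (Fin n) K) (hr : r - 1 ∈ maxGraded K n)
    (h : ∀ u ∈ U, r * u ∈ V) : U ≤ V := by
  obtain ⟨G, -, rfl⟩ := hU
  obtain ⟨H, -, rfl⟩ := hV
  rw [Ideal.span_le]
  rintro _ ⟨T, hT, rfl⟩
  have h1 := h _ (Ideal.subset_span ⟨T, hT, rfl⟩)
  have hc : coeff 0 r = 1 := by
    have := constantCoeff_of_mem K _ hr
    rw [map_sub, map_one, sub_eq_zero] at this
    exact this
  rw [mem_span_sqMon] at h1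
  rw [SetLike.mem_coe, mem_span_sqMon]
  intro m hm
  rw [sqMon_eq] at hm
  have hm := Finset.mem_singleton.1 (support_monomial_subset hm)
  subst hm
  apply h1
  rw [mem_support_iff, sqMon_eq, coeff_mul_monomial']
  simp [hc]

noncomputable def pi0 (K : Type) [Field K] (n : ℕ) :
    MvPolynomial (Fin (n + 1)) K →ₐ[K] MvPolynomial (Fin n) K :=
  aeval (Fin.lastCases (motive := fun _ => MvPolynomial (Fin n) K) 0 X)

lemma pi0_last (K : Type) [Field K] (n : ℕ) : pi0 K n (X (Fin.last n)) = 0 := by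
  simp [pi0]

lemma pi0_castSucc (K : Type) [Field K] (n : ℕ) (i : Fin n) :
    pi0 K n (X (Fin.castSucc i)) = X i := by
  simp [pi0]

lemma pi0_rename (K : Type) [Field K] (n : ℕ) (p : MvPolynomial (Fin n) K) :
    pi0 K n (rename Fin.castSucc p) = p := by
  have : (pi0 K n).comp (rename Fin.castSucc) = AlgHom.id K _ := by
    apply algHom_ext
    intro i
    simp [pi0_castSucc]
  exact DFunLike.congr_fun this p

lemma sub_mem_last (K : Type) [Field K] (n : ℕ) (s : MvPolynomial (Fin (n + 1)) K) :
    s - rename Fin.castSucc (pi0 K n s) ∈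
      Ideal.span {(X (Fin.last n) : MvPolynomial (Fin (n + 1)) K)} := by
  have : (Ideal.Quotient.mkₐ K (Ideal.span {(X (Fin.last n) : MvPolynomial (Fin (n + 1)) K)})) =
      ((Ideal.Quotient.mkₐ K (Ideal.span {(X (Fin.last n) : MvPolynomial (Fin (n + 1)) K)})).comp
        (rename Fin.castSucc)).comp (pi0 K n) := by
    apply algHom_ext
    intro i
    refine Fin.lastCases ?_ (fun j => ?_) i
    · simp only [AlgHom.comp_apply, pi0_last, map_zero]
      exact Ideal.Quotient.eq_zero_iff_mem.2 (Ideal.mem_span_singleton_self _)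
    · simp [AlgHom.comp_apply, pi0_castSucc]
  have := DFunLike.congr_fun this s
  exact Ideal.Quotient.eq.1 this

lemma pi0_mem (K : Type) [Field K] (n : ℕ) (s : MvPolynomial (Fin (n + 1)) K)
    (hs : s ∈ maxGraded K (n + 1)) : pi0 K n s ∈ maxGraded K n := by
  have : maxGraded K (n + 1) ≤ Ideal.comap (pi0 K n) (maxGraded K n) := by
    rw [maxGraded, Ideal.span_le]
    rintro _ ⟨i, rfl⟩
    refine Fin.lastCases ?_ (fun j => ?_) i
    · simp [pi0_last]
    · simpa [pi0_castSucc] using X_mem_max K j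
  exact this hs

lemma rename_mem (K : Type) [Field K] (n : ℕ) (s : MvPolynomial (Fin n) K)
    (hs : s ∈ maxGraded K n) : rename Fin.castSucc s ∈ maxGraded K (n + 1) := by
  have : maxGraded K n ≤ Ideal.comap (rename Fin.castSucc) (maxGraded K (n + 1)) := by
    rw [maxGraded, Ideal.span_le]
    rintro _ ⟨i, rfl⟩
    simpa using X_mem_max K _
  exact this hs

lemma pi0_mem_of_mem_map (K : Type) [Field K] (n : ℕ) (U : Ideal (MvPolynomial (Fin n) K))
    (s : MvPolynomial (Fin (n + 1)) K) (hs : s ∈ Ideal.map (rename Fin.castSucc) U) :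
    pi0 K n s ∈ U := by
  have : Ideal.map (rename Fin.castSucc) U ≤ Ideal.comap (pi0 K n) U := by
    rw [Ideal.map_le_iff_le_comap]
    intro u hu
    simpa [pi0_rename] using hu
  exact this hs

lemma hasReg_poly_abs {R R' : Type} [CommRing R] [CommRing R'] (I : Ideal R) (I' : Ideal R')
    (p : R →+* R') (q : R' →+* R) (hpq : ∀ x, p (q x) = x) (hp : ∀ x ∈ I, p x ∈ I')
    (hq : ∀ x ∈ I', q x ∈ I) (x : R) (hxI : x ∈ I) (hpx : p x = 0)
    (hsub : ∀ s, s - q (p s) ∈ Ideal.span {x}) (J : Ideal R) (U : Ideal R')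
    (hJU : ∀ s ∈ J, p s ∈ U) (hUJ : ∀ u ∈ U, q u ∈ J) (hreg : ∀ s, x * s ∈ J → s ∈ J)
    (k : ℕ) (h : HasReg I' (R' ⧸ U) k) : HasReg I (R ⧸ J) (k + 1) := by
  let Q := QuotSMulTop x (R ⧸ J)
  let mm : R →ₗ[R] Q :=
    (Submodule.mkQ _).comp (Submodule.mkQ J)
  have hmm : ∀ s, mm s = 0 ↔ ∃ t, s - x * t ∈ J := by
    intro s
    change Submodule.Quotient.mk (Submodule.Quotient.mk s) = _ ↔ _
    rw [Submodule.Quotient.mk_eq_zero, Submodule.mem_smul_pointwise_iff_exists]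
    constructor
    · rintro ⟨y, -, hy⟩
      obtain ⟨t, rfl⟩ := Submodule.Quotient.mk_surjective _ y
      rw [← Submodule.Quotient.mk_smul] at hy
      exact ⟨t, (Submodule.Quotient.eq _).1 hy.symm⟩
    · rintro ⟨t, ht⟩
      refine ⟨Submodule.Quotient.mk t, trivial, ?_⟩
      rw [← Submodule.Quotient.mk_smul]
      exact ((Submodule.Quotient.eq _).2 ht).symm
  have hmx : ∀ s ∈ Ideal.span {x}, mm s = 0 := by
    intro s hs
    obtain ⟨t, rfl⟩ := Ideal.mem_span_singleton'.1 hs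
    exact (hmm _).2 ⟨t, by simp [mul_comm]⟩
  let f0 : R' →ₛₗ[q] Q :=
    { toFun := fun u => mm (q u)
      map_add' := fun a b => by rw [map_add, map_add]
      map_smul' := fun a b => by rw [smul_eq_mul, map_mul, ← smul_eq_mul, map_smul] }
  let f : (R' ⧸ U) →ₛₗ[q] Q := Submodule.liftQ U f0 (by
    intro u hu
    refine (hmm _).2 ⟨0, ?_⟩
    rw [mul_zero, sub_zero]
    exact hUJ _ hu)
  have hf : ∀ u, f (Submodule.Quotient.mk u) = mm (q u) := fun _ => rfl
  have hbij : Function.Bijective f := by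
    constructor
    · rw [injective_iff_map_eq_zero]
      intro a ha
      obtain ⟨u, rfl⟩ := Submodule.Quotient.mk_surjective _ a
      rw [hf, hmm] at ha
      obtain ⟨t, ht⟩ := ha
      have := hJU _ ht
      rw [map_sub, map_mul, hpx, zero_mul, sub_zero, hpq] at this
      exact (Submodule.Quotient.mk_eq_zero _).2 this
    · intro y
      obtain ⟨y, rfl⟩ := Submodule.Quotient.mk_surjective _ y
      obtain ⟨s, rfl⟩ := Submodule.Quotient.mk_surjective _ y
      refine ⟨Submodule.Quotient.mk (p s), ?_⟩
      rw [hf]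
      change _ = mm s
      have := hmx _ (hsub s)
      rw [map_sub, sub_eq_zero] at this
      exact this.symm
  let e : (R' ⧸ U) ≃+ Q := AddEquiv.ofBijective f.toAddMonoidHom hbij
  have he : ∀ (r : R) a,
      e (p r • a) = r • e a := by
    intro r a
    obtain ⟨u, rfl⟩ := Submodule.Quotient.mk_surjective _ a
    change mm (q (p r * u)) = r • mm (q u)
    rw [← map_smul, eq_comm, ← sub_eq_zero, ← map_sub, smul_eq_mul, map_mul, ← sub_mul]
    exact hmx _ (Ideal.mul_mem_right _ _ (hsub r))
  rw [hasReg_transfer I I' p q hpq hp hq _ Q e he] at h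
  obtain ⟨rs, hk, hm, hr⟩ := h
  refine ⟨x :: rs, by simp [hk], ?_, ?_⟩
  · simpa using ⟨hxI, hm⟩
  · rw [isRegular_cons_iff]
    refine ⟨?_, hr⟩
    rw [isSMulRegular_quotient_iff_mem_of_smul_mem]
    exact fun s hs => hreg s hs

lemma hasReg_poly (K : Type) [Field K] (n : ℕ) (U : Ideal (MvPolynomial (Fin n) K))
    (hU : GenBySqMonOfDeg K (fun _ => True) U) (k : ℕ)
    (h : HasReg (maxGraded K n) (MvPolynomial (Fin n) K ⧸ U) k) :
    HasReg (maxGraded K (n + 1))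
      (MvPolynomial (Fin (n + 1)) K ⧸ Ideal.map (rename Fin.castSucc) U) (k + 1) := by
  have h1 := last_mul_mem K U hU
  have h2 := pi0_mem_of_mem_map K n U
  have h3 : ∀ u ∈ U, rename Fin.castSucc u ∈ Ideal.map (rename (R := K) Fin.castSucc) U :=
    fun u hu => Ideal.mem_map_of_mem _ hu
  generalize Ideal.map (rename (R := K) Fin.castSucc) U = J at h1 h2 h3 ⊢
  exact hasReg_poly_abs (maxGraded K (n + 1)) (maxGraded K n) (pi0 K n).toRingHom
    (rename (R := K) Fin.castSucc).toRingHom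
    (pi0_rename K n) (pi0_mem K n) (rename_mem K n) (X (Fin.last n)) (X_mem_max K _)
    (pi0_last K n) (sub_mem_last K n) J U h2 h3 h1 k h

def AQ {K : Type} [Field K] {n : ℕ} (U V : Ideal (MvPolynomial (Fin n) K)) : Type :=
  idealQuot U V

noncomputable instance {K : Type} [Field K] {n : ℕ} (U V : Ideal (MvPolynomial (Fin n) K)) :
    AddCommGroup (AQ U V) := inferInstanceAs (AddCommGroup (idealQuot U V))

noncomputable instance {K : Type} [Field K] {n : ℕ} (U V : Ideal (MvPolynomial (Fin n) K)) :
    Module (MvPolynomial (Fin (n + 1)) K) (AQ U V) :=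
  Module.compHom (idealQuot U V) (pi0 K n : _ →+* MvPolynomial (Fin n) K)

lemma main_aux (n : ℕ) (K : Type) [Field K]
    (U V : Ideal (MvPolynomial (Fin n) K))
    (hU : GenBySqMonOfDeg K (fun _ => True) U)
    (hV : GenBySqMonOfDeg K (fun _ => True) V)
    (hVU : V ≤ U) (hne : U ≠ V)
    (W : Ideal (MvPolynomial (Fin (n + 1)) K))
    (hW : W = Ideal.map (rename Fin.castSucc) V +
      Ideal.span {(X (Fin.last n) : MvPolynomial (Fin (n + 1)) K)} *
        Ideal.map (rename Fin.castSucc) U)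
    (d : ℕ∞)
    (hdU : moduleDepth (maxGraded K n) (MvPolynomial (Fin n) K ⧸ U) = d) :
    moduleDepth (maxGraded K n) (idealQuot U V) = d ↔
      moduleDepth (maxGraded K (n + 1)) (MvPolynomial (Fin (n + 1)) K ⧸ W) = d := by
  set J := Ideal.map (rename Fin.castSucc) U with hJ
  set x : MvPolynomial (Fin (n + 1)) K := X (Fin.last n) with hx
  let q : MvPolynomial (Fin n) K →+* MvPolynomial (Fin (n + 1)) K :=
    (rename Fin.castSucc : MvPolynomial (Fin n) K →ₐ[K] MvPolynomial (Fin (n + 1)) K)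
  let p : MvPolynomial (Fin (n + 1)) K →+* MvPolynomial (Fin n) K := pi0 K n
  have hWJ : W ≤ J := by
    rw [hW, Submodule.add_eq_sup, sup_le_iff]
    exact ⟨Ideal.map_mono hVU, Ideal.mul_le_right⟩
  have hVW : ∀ v ∈ V, q v ∈ W := by
    intro v hv
    rw [hW, Submodule.add_eq_sup]
    exact Ideal.mem_sup_left (Ideal.mem_map_of_mem _ hv)
  have hxW : ∀ s ∈ Ideal.span {x}, ∀ u ∈ U, s * q u ∈ W := by
    intro s hs u hu
    rw [hW, Submodule.add_eq_sup]
    exact Ideal.mem_sup_right (Ideal.mul_mem_mul hs (Ideal.mem_map_of_mem _ hu))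
  have hpW : ∀ s ∈ W, p s ∈ V := by
    have : W ≤ Ideal.comap p V := by
      rw [hW, Submodule.add_eq_sup, sup_le_iff]
      refine ⟨fun s hs => pi0_mem_of_mem_map K n V s hs, ?_⟩
      refine Ideal.mul_le_left.trans ?_
      rw [Ideal.span_le, Set.singleton_subset_iff]
      change pi0 K n x ∈ V
      rw [hx, pi0_last]
      exact V.zero_mem
    exact this
  let f0 : U →ₛₗ[q] (MvPolynomial (Fin (n + 1)) K ⧸ W) :=
    { toFun := fun u => Submodule.Quotient.mk (q u)
      map_add' := fun a b => by
        rw [← Submodule.Quotient.mk_add, ← map_add]; rfl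
      map_smul' := fun a b => by
        rw [← Submodule.Quotient.mk_smul, smul_eq_mul, ← map_mul]; rfl }
  let f1 : idealQuot U V →ₛₗ[q] (MvPolynomial (Fin (n + 1)) K ⧸ W) := Submodule.liftQ _ f0 (by
    intro u hu
    exact (Submodule.Quotient.mk_eq_zero _).2 (hVW _ hu))
  have hf1 : ∀ u : U, f1 (Submodule.Quotient.mk u) = Submodule.Quotient.mk (q u) := fun _ => rfl
  have hf1s : ∀ r a, f1 (p r • a) = r • f1 a := by
    intro r a
    obtain ⟨u, rfl⟩ := Submodule.Quotient.mk_surjective _ a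
    rw [← Submodule.Quotient.mk_smul, hf1, hf1, ← Submodule.Quotient.mk_smul, eq_comm,
      Submodule.Quotient.eq]
    change r * q u - q (p r * u) ∈ W
    rw [map_mul, ← sub_mul]
    exact hxW _ (sub_mem_last K n r) _ u.2
  let f : AQ U V →ₗ[MvPolynomial (Fin (n + 1)) K] (MvPolynomial (Fin (n + 1)) K ⧸ W) :=
    { toFun := f1
      map_add' := map_add f1
      map_smul' := hf1s }
  have hf : Function.Injective f := by
    rw [injective_iff_map_eq_zero]
    intro a ha
    obtain ⟨u, rfl⟩ := Submodule.Quotient.mk_surjective _ a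
    have h1 := hpW _ ((Submodule.Quotient.mk_eq_zero _).1 ha)
    have h2 : p (q u) = u := pi0_rename K n _
    rw [h2] at h1
    exact (Submodule.Quotient.mk_eq_zero _).2 h1
  have hran : ∀ s ∈ J, (Submodule.Quotient.mk s : MvPolynomial (Fin (n + 1)) K ⧸ W) ∈
      LinearMap.range f := by
    have : J ≤ Submodule.comap (Submodule.mkQ W) (LinearMap.range f) := by
      rw [hJ, Ideal.map, Ideal.span_le]
      rintro _ ⟨u, hu, rfl⟩
      exact ⟨Submodule.Quotient.mk ⟨u, hu⟩, rfl⟩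
    exact this
  have htr : ∀ k, HasReg (maxGraded K n) (idealQuot U V) k ↔
      HasReg (maxGraded K (n + 1)) (AQ U V) k := by
    intro k
    exact hasReg_transfer (maxGraded K (n + 1)) (maxGraded K n) p q
      (pi0_rename K n) (pi0_mem K n) (rename_mem K n) (idealQuot U V) (AQ U V)
      (AddEquiv.refl (idealQuot U V)) (fun _ _ => rfl) k
  rw [moduleDepth_congr _ _ _ _ htr]
  by_cases hUt : U = ⊤
  · have hs : Function.Surjective f := by
      intro y
      obtain ⟨s, rfl⟩ := Submodule.Quotient.mk_surjective _ y
      apply hran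
      rw [hJ, hUt, Ideal.map_top]
      trivial
    rw [moduleDepth_congr _ _ _ _ fun k => hasReg_transfer (maxGraded K (n + 1))
      (maxGraded K (n + 1)) (RingHom.id _) (RingHom.id _) (fun _ => rfl) (fun _ h => h)
      (fun _ h => h) _ _ (LinearEquiv.ofBijective f ⟨hf, hs⟩).toAddEquiv
      (fun r a => map_smul f r a) k]
  have hUm := le_maxGraded K U hU hUt
  have hJm : J ≤ maxGraded K (n + 1) := by
    rw [hJ, Ideal.map_le_iff_le_comap]
    exact fun u hu => rename_mem K n u (hUm hu)
  have hB := smul_top_lt_quot _ _ (hWJ.trans hJm) (maxGraded_ne_top K (n + 1))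
  have hC := smul_top_lt_quot _ _ hJm (maxGraded_ne_top K (n + 1))
  have hU0 := smul_top_lt_quot _ _ hUm (maxGraded_ne_top K n)
  have : Module.Finite (MvPolynomial (Fin (n + 1)) K) (AQ U V) :=
    Module.Finite.of_injective f hf
  have hA : maxGraded K (n + 1) •
      (⊤ : Submodule (MvPolynomial (Fin (n + 1)) K) (AQ U V)) < ⊤ := by
    rw [lt_top_iff_ne_top]
    intro ht
    obtain ⟨r, hr, h1⟩ := Submodule.exists_sub_one_mem_and_smul_eq_zero_of_fg_of_le_smul _
      (⊤ : Submodule (MvPolynomial (Fin (n + 1)) K) (AQ U V)) Module.Finite.fg_top ht.ge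
    apply hne
    refine le_antisymm (nak_aux K U V hU hV (p r) ?_ ?_) hVU
    · have := pi0_mem K n _ hr
      rwa [map_sub, map_one] at this
    · intro u hu
      have h2 : p r • (Submodule.Quotient.mk ⟨u, hu⟩ : AQ U V) = 0 := h1 _ trivial
      rw [← Submodule.Quotient.mk_smul, Submodule.Quotient.mk_eq_zero] at h2
      exact h2
  let g : (MvPolynomial (Fin (n + 1)) K ⧸ W) →ₗ[MvPolynomial (Fin (n + 1)) K]
      (MvPolynomial (Fin (n + 1)) K ⧸ J) := Submodule.factor hWJ
  have hg : Function.Surjective g := Submodule.factor_surjective hWJ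
  have hfg : Function.Exact f g := by
    intro y
    constructor
    · intro hy
      obtain ⟨s, rfl⟩ := Submodule.Quotient.mk_surjective _ y
      exact hran s ((Submodule.Quotient.mk_eq_zero J).1 hy)
    · rintro ⟨a, rfl⟩
      obtain ⟨u, rfl⟩ := Submodule.Quotient.mk_surjective _ a
      exact (Submodule.Quotient.mk_eq_zero J).2 (Ideal.mem_map_of_mem _ u.2)
  have key : ∀ k : ℕ, (k : ℕ∞) ≤ d + 1 →
      ((k : ℕ∞) ≤ moduleDepth (maxGraded K (n + 1)) (AQ U V) ↔
      (k : ℕ∞) ≤ moduleDepth (maxGraded K (n + 1)) (MvPolynomial (Fin (n + 1)) K ⧸ W)) := by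
    intro k hk
    rw [← hasReg_iff (zero_hasReg _ _ hA), ← hasReg_iff (zero_hasReg _ _ hB)]
    rcases k with _ | k
    · exact ⟨fun _ => zero_hasReg _ _ hB, fun _ => zero_hasReg _ _ hA⟩
    have hk' : (k : ℕ∞) ≤ d := by
      push_cast at hk
      exact (ENat.add_le_add_iff_right (by simp)).1 hk
    rw [← hdU, ← hasReg_iff (zero_hasReg _ _ hU0)] at hk'
    exact hasReg_ses _ _ _ _ f g hf hg hfg hA hB hC (k + 1) (hasReg_poly K n U hU k hk') _ le_rfl
  exact ⟨enat_aux key, enat_aux fun k hk => (key k hk).symm⟩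

/-- Lemma 3.2.  Here `S' = K[x_1,…,x_n]` is embedded in
`S = S'[x_{n+1}] = K[x_1,…,x_{n+1}]` via `rename Fin.castSucc`, and the last
variable `X (Fin.last n)` plays the role of `x_n` of the paper. -/
theorem stmt_13 (n : ℕ) (K : Type) [Field K]
    (U V : Ideal (MvPolynomial (Fin n) K))
    (hU : GenBySqMonOfDeg K (fun _ => True) U)
    (hV : GenBySqMonOfDeg K (fun _ => True) V)
    (hVU : V ≤ U) (hne : U ≠ V)
    (W : Ideal (MvPolynomial (Fin (n + 1)) K))
    (hW : W = Ideal.map (rename Fin.castSucc) V +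
      Ideal.span {(X (Fin.last n) : MvPolynomial (Fin (n + 1)) K)} *
        Ideal.map (rename Fin.castSucc) U)
    (d : ℕ∞)
    (hdU : moduleDepth (maxGraded K n) (MvPolynomial (Fin n) K ⧸ U) = d)
    (hdV : moduleDepth (maxGraded K n) (MvPolynomial (Fin n) K ⧸ V) = d) :
    moduleDepth (maxGraded K n) (idealQuot U V) = d ↔
      moduleDepth (maxGraded K (n + 1)) (MvPolynomial (Fin (n + 1)) K ⧸ W) = d := by
  exact main_aux n K U V hU hV hVU hne W hW d hdU
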